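/- Let a and b be positive integers with gcd(a, b) = 1 and let p ∈ ℂ[x,y] be an irreducible polynomial that is quasi-homogeneous of type (d; a, b) for some d. Then there exists a nonzero constant c ∈ ℂ such that either p = c·x, or p = c·y, or p = c·(y^a − α·x^b) for some nonzero α ∈ ℂ. -/

import Mathlib

open MvPolynomial

/-!
Suppose that neither `x` nor `y` divides `p`. Then `p` has a monomial `x ^ N` and a monomial
`y ^ M`, so `p(1, y)` is a nonconstant polynomial with nonzero constant term and has a root
`t ≠ 0`. Modulo `y ^ a - t ^ a * x ^ b` every monomial `x ^ i * y ^ j` of weighted degree `N * a`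
is congruent to `t ^ j * x ^ N`, so `p` is congruent to `p(1, t) * x ^ N = 0`, and irreducibility
makes `p` a constant multiple of this binomial.
-/

section Divisors

variable {σ R : Type*}

theorem exists_mem_support_eq_zero_of_not_X_dvd [CommSemiring R] {p : MvPolynomial σ R} {i : σ}
    (h : ¬ X i ∣ p) : ∃ m ∈ p.support, m i = 0 := by
  contrapose! h
  rw [p.as_sum]
  exact Finset.dvd_sum fun m hm => X_dvd_monomial.mpr (Or.inr (h m hm))

theorem not_irreducible_mvPolynomial_C {K : Type*} [Field K] (c : K) :
    ¬ Irreducible (C c : MvPolynomial σ K) := by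
  intro h
  have hc : c ≠ 0 := fun h0 => h.ne_zero (by rw [h0, C_0])
  exact h.not_isUnit (hc.isUnit.map C)

theorem exists_eq_C_mul_of_irreducible_of_dvd_of_eval_eq_zero [CommRing R] [IsReduced R]
    [Nontrivial R] {p q : MvPolynomial σ R} (hp : Irreducible p) (hqp : q ∣ p) {x : σ → R}
    (hq : eval x q = 0) : ∃ c : R, c ≠ 0 ∧ p = C c * q := by
  obtain ⟨u, rfl⟩ := hqp
  have hq_unit : ¬ IsUnit q := fun h => not_isUnit_zero (hq ▸ h.map (eval x))
  have hu : IsUnit u := (hp.isUnit_or_isUnit rfl).resolve_left hq_unit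
  obtain ⟨c, hc, rfl⟩ := isUnit_iff_eq_C_of_isReduced.mp hu
  exact ⟨c, hc.ne_zero, mul_comm _ _⟩

end Divisors

theorem weightedDegree_ne_zero_of_irreducible {σ K M : Type*} [Field K] [AddCommMonoid M]
    [PartialOrder M] [CanonicallyOrderedAdd M] [IsAddTorsionFree M] {w : σ → M}
    (hw : ∀ i, w i ≠ 0) {p : MvPolynomial σ K} (hirr : Irreducible p) {d : M}
    (hp : p.IsWeightedHomogeneous w d) : d ≠ 0 := by
  rintro rfl
  have hconst : p = C (coeff 0 p) := by
    rw [← weightedHomogeneousComponent_zero p hw, hp.weightedHomogeneousComponent_same]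
  exact not_irreducible_mvPolynomial_C (coeff 0 p) (hconst ▸ hirr)

theorem exists_ne_zero_eval_eq_zero_of_coeff_ne_zero {K : Type*} [Field K] [IsAlgClosed K]
    {g : Polynomial K} {n : ℕ} (hn : n ≠ 0) (hgn : g.coeff n ≠ 0) (hg0 : g.coeff 0 ≠ 0) :
    ∃ t : K, t ≠ 0 ∧ g.eval t = 0 := by
  have hdeg : g.degree ≠ 0 := fun h =>
    hgn (Polynomial.coeff_eq_zero_of_degree_lt (h ▸ by exact_mod_cast hn.pos))
  obtain ⟨t, ht⟩ := IsAlgClosed.exists_root g hdeg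
  refine ⟨t, ?_, ht⟩
  rintro rfl
  exact hg0 (g.coeff_zero_eq_eval_zero.trans ht)

section Dehomogenize

variable {R : Type*} [CommSemiring R]

/-- The dehomogenization `p(1, y)` of `p(x, y)`, where `x = X 0` and `y = X 1`. No term is lost
when `p` is quasi-homogeneous: the weighted degree and the exponent of `y` determine that of `x`. -/
noncomputable def dehomogenize (p : MvPolynomial (Fin 2) R) : Polynomial R :=
  aeval ![1, Polynomial.X] p

theorem dehomogenize_eq_sum (p : MvPolynomial (Fin 2) R) :
    dehomogenize p = ∑ m ∈ p.support, Polynomial.monomial (m 1) (coeff m p) := by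
  simp [dehomogenize, aeval_def, eval₂_eq', Fin.prod_univ_two, Polynomial.C_mul_X_pow_eq_monomial]

theorem eval_dehomogenize (p : MvPolynomial (Fin 2) R) (t : R) :
    (dehomogenize p).eval t = ∑ m ∈ p.support, coeff m p * t ^ m 1 := by
  simp [dehomogenize_eq_sum, Polynomial.eval_finsetSum]

theorem mul_add_mul_eq_of_mem_support {a b d : ℕ} {p : MvPolynomial (Fin 2) R}
    (hp : p.IsWeightedHomogeneous ![a, b] d) {m : Fin 2 →₀ ℕ} (hm : m ∈ p.support) :
    m 0 * a + m 1 * b = d := by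
  simpa [Finsupp.weight_eq_sum, Fin.sum_univ_two] using hp (mem_support_iff.mp hm)

theorem coeff_dehomogenize {a b d : ℕ} (ha : 0 < a) {p : MvPolynomial (Fin 2) R}
    (hp : p.IsWeightedHomogeneous ![a, b] d) {m : Fin 2 →₀ ℕ} (hm : m ∈ p.support) :
    (dehomogenize p).coeff (m 1) = coeff m p := by
  have eq_of_apply_one_eq : ∀ m' ∈ p.support, m' 1 = m 1 → m' = m := by
    intro m' hm' h1
    have hweight := (mul_add_mul_eq_of_mem_support hp hm').trans
      (mul_add_mul_eq_of_mem_support hp hm).symm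
    have h0 : m' 0 = m 0 := Nat.eq_of_mul_eq_mul_right ha (Nat.add_right_cancel (h1 ▸ hweight))
    exact Finsupp.ext (Fin.forall_fin_two.mpr ⟨h0, h1⟩)
  simp only [dehomogenize_eq_sum, Polynomial.finsetSum_coeff, Polynomial.coeff_monomial]
  rw [Finset.sum_eq_single_of_mem m hm fun m' hm' hne =>
    if_neg fun h1 => hne (eq_of_apply_one_eq m' hm' h1), if_pos rfl]

end Dehomogenize

theorem exists_eq_mul_and_eq_add_mul_of_coprime {a b i j N : ℕ} (ha : 0 < a)
    (hab : Nat.Coprime a b) (h : i * a + j * b = N * a) : ∃ l, j = a * l ∧ N = i + b * l := by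
  obtain ⟨l, rfl⟩ : a ∣ j := hab.dvd_of_dvd_mul_right <|
    (Nat.dvd_add_right (Nat.dvd_mul_left a i)).mp (h ▸ Nat.dvd_mul_left a N)
  exact ⟨l, rfl, Nat.eq_of_mul_eq_mul_right ha (by linarith)⟩

section BinomialFactor

variable {R : Type*} [CommRing R] {a b N : ℕ}

theorem binomial_dvd_X_pow_mul_X_pow_sub {i j : ℕ} (ha : 0 < a) (hab : Nat.Coprime a b)
    (h : i * a + j * b = N * a) (t : R) :
    (X 1 ^ a - C (t ^ a) * X 0 ^ b : MvPolynomial (Fin 2) R) ∣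
      X 0 ^ i * X 1 ^ j - C (t ^ j) * X 0 ^ N := by
  obtain ⟨l, rfl, rfl⟩ := exists_eq_mul_and_eq_add_mul_of_coprime ha hab h
  have hfactor : (X 0 ^ i * X 1 ^ (a * l) - C (t ^ (a * l)) * X 0 ^ (i + b * l) :
      MvPolynomial (Fin 2) R) =
        X 0 ^ i * ((X 1 ^ a) ^ l - (C (t ^ a) * X 0 ^ b) ^ l) := by
    simp only [map_pow]
    ring
  exact hfactor ▸ (sub_dvd_pow_sub_pow _ _ l).mul_left _

theorem binomial_dvd_of_eval_dehomogenize_eq_zero (ha : 0 < a) (hab : Nat.Coprime a b)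
    {p : MvPolynomial (Fin 2) R} (hp : p.IsWeightedHomogeneous ![a, b] (N * a)) {t : R}
    (ht : (dehomogenize p).eval t = 0) : X 1 ^ a - C (t ^ a) * X 0 ^ b ∣ p := by
  have hsum : p = ∑ m ∈ p.support,
      C (coeff m p) * (X 0 ^ m 0 * X 1 ^ m 1 - C (t ^ m 1) * X 0 ^ N) := by
    calc p = ∑ m ∈ p.support, C (coeff m p) * (X 0 ^ m 0 * X 1 ^ m 1) := by
          conv_lhs => rw [p.as_sum]
          simp only [monomial_eq, Finsupp.prod_pow, Fin.prod_univ_two]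
      _ = ∑ m ∈ p.support, C (coeff m p) * (X 0 ^ m 0 * X 1 ^ m 1) -
            C ((dehomogenize p).eval t) * X 0 ^ N := by
          rw [ht, C_0, zero_mul, sub_zero]
      _ = _ := by
          simp only [eval_dehomogenize, map_sum, map_mul, Finset.sum_mul, mul_sub,
            Finset.sum_sub_distrib, mul_assoc]
  rw [hsum]
  exact Finset.dvd_sum fun m hm => (binomial_dvd_X_pow_mul_X_pow_sub ha hab
    (mul_add_mul_eq_of_mem_support hp hm) t).mul_left _

end BinomialFactor

section IsAlgClosed

variable {K : Type*} [Field K] [IsAlgClosed K]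

theorem exists_binomial_dvd_of_not_X_dvd {a b d : ℕ} (ha : 0 < a) (hab : Nat.Coprime a b)
    (hd : d ≠ 0) {p : MvPolynomial (Fin 2) K} (hp : p.IsWeightedHomogeneous ![a, b] d)
    (hx : ¬ X 0 ∣ p) (hy : ¬ X 1 ∣ p) :
    ∃ α : K, α ≠ 0 ∧ X 1 ^ a - C α * X 0 ^ b ∣ p := by
  obtain ⟨m₀, hm₀, hm₀_x⟩ := exists_mem_support_eq_zero_of_not_X_dvd hx
  obtain ⟨m₁, hm₁, hm₁_y⟩ := exists_mem_support_eq_zero_of_not_X_dvd hy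
  have hd₀ : m₀ 1 * b = d := by
    simpa [hm₀_x] using mul_add_mul_eq_of_mem_support hp hm₀
  have hd₁ : m₁ 0 * a = d := by
    simpa [hm₁_y] using mul_add_mul_eq_of_mem_support hp hm₁
  have hcoeff : ∀ m ∈ p.support, (dehomogenize p).coeff (m 1) ≠ 0 := fun m hm =>
    (coeff_dehomogenize ha hp hm).symm ▸ mem_support_iff.mp hm
  obtain ⟨t, ht, hroot⟩ := exists_ne_zero_eval_eq_zero_of_coeff_ne_zero
    (left_ne_zero_of_mul (hd₀ ▸ hd)) (hcoeff m₀ hm₀) (hm₁_y ▸ hcoeff m₁ hm₁)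
  exact ⟨t ^ a, pow_ne_zero a ht,
    binomial_dvd_of_eval_dehomogenize_eq_zero ha hab (hd₁ ▸ hp) hroot⟩

theorem irreducible_weighted_homogeneous_classification_general {a b : ℕ} (ha : 0 < a)
    (hb : 0 < b) (hab : Nat.Coprime a b) {d : ℕ} {p : MvPolynomial (Fin 2) K}
    (hirr : Irreducible p) (hph : p.IsWeightedHomogeneous ![a, b] d) :
    ∃ c : K, c ≠ 0 ∧
      (p = C c * X 0 ∨ p = C c * X 1 ∨
        ∃ α : K, α ≠ 0 ∧ p = C c * (X 1 ^ a - C α * X 0 ^ b)) := by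
  have eq_C_mul_of_dvd {q : MvPolynomial (Fin 2) K} (hq : eval 0 q = 0) (hqp : q ∣ p) :
      ∃ c : K, c ≠ 0 ∧ p = C c * q :=
    exists_eq_C_mul_of_irreducible_of_dvd_of_eval_eq_zero hirr hqp hq
  by_cases hx : X 0 ∣ p
  · obtain ⟨c, hc, hpc⟩ := eq_C_mul_of_dvd (by simp) hx
    exact ⟨c, hc, Or.inl hpc⟩
  by_cases hy : X 1 ∣ p
  · obtain ⟨c, hc, hpc⟩ := eq_C_mul_of_dvd (by simp) hy
    exact ⟨c, hc, Or.inr (Or.inl hpc)⟩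
  have hd : d ≠ 0 := weightedDegree_ne_zero_of_irreducible
    (Fin.forall_fin_two.mpr ⟨ha.ne', hb.ne'⟩) hirr hph
  obtain ⟨α, hα, hdvd⟩ := exists_binomial_dvd_of_not_X_dvd ha hab hd hph hx hy
  obtain ⟨c, hc, hpc⟩ := eq_C_mul_of_dvd (by simp [ha.ne', hb.ne']) hdvd
  exact ⟨c, hc, Or.inr (Or.inr ⟨α, hα, hpc⟩)⟩

end IsAlgClosed

/-- Classification of irreducible quasi-homogeneous polynomials in `ℂ[x,y]`
with coprime weights: up to a nonzero constant, they are `x`, `y`, or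
`y^a - α·x^b` with `α ≠ 0`. -/
theorem irreducible_weighted_homogeneous_classification
    (a b : ℕ) (ha : 0 < a) (hb : 0 < b) (hab : Nat.gcd a b = 1)
    (d : ℕ) (p : MvPolynomial (Fin 2) ℂ) (hirr : Irreducible p)
    (hph : p.IsWeightedHomogeneous ![a, b] d) :
    ∃ c : ℂ, c ≠ 0 ∧
      (p = C c * X 0 ∨ p = C c * X 1 ∨
        ∃ α : ℂ, α ≠ 0 ∧ p = C c * (X 1 ^ a - C α * X 0 ^ b)) :=
  irreducible_weighted_homogeneous_classification_general ha hb hab hirr hph
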